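/- Let 𝔤 be a finite-dimensional Lie algebra over a field of characteristic zero and 𝔤₀ ⊆ 𝔤 a nonzero Lie subalgebra such that the pair (𝔤,𝔤₀) is effective, with order r = o(𝔤,𝔤₀). Then 𝔤₀ ∩ 𝔤_{(r−1)} ≠ 0, where 𝔤_{(r−1)} is the (r−1)-st term of the lower central series of 𝔤; i.e., there exists a nonzero element of 𝔤₀ lying in 𝔤_{(r−1)}. -/

import Mathlib

/-- One step of the Weisfeiler filtration: `{x ∈ S | ∀ y, ⁅x, y⁆ ∈ S}`. -/
def weisfeilerStep {K L : Type*} [Field K] [LieRing L] [LieAlgebra K L]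
    (S : Submodule K L) : Submodule K L where
  carrier := {x | x ∈ S ∧ ∀ y : L, ⁅x, y⁆ ∈ S}
  add_mem' := fun ha hb => ⟨S.add_mem ha.1 hb.1, fun y => by
    rw [add_lie]; exact S.add_mem (ha.2 y) (hb.2 y)⟩
  zero_mem' := ⟨S.zero_mem, fun y => by rw [zero_lie]; exact S.zero_mem⟩
  smul_mem' := fun c x hx => ⟨S.smul_mem c hx.1, fun y => by
    rw [smul_lie]; exact S.smul_mem c (hx.2 y)⟩

/-- The Weisfeiler filtration of the pair `(L, g₀)`:
`W 0 = g₀` and `W (k+1) = {x ∈ W k | ∀ y : L, ⁅x, y⁆ ∈ W k}`. -/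
def weisfeiler {K L : Type*} [Field K] [LieRing L] [LieAlgebra K L]
    (g₀ : LieSubalgebra K L) : ℕ → Submodule K L
  | 0 => g₀.toSubmodule
  | (k + 1) => weisfeilerStep (weisfeiler g₀ k)

/-- The pair `(L, g₀)` is effective: the only ideal of `L` contained in `g₀` is zero. -/
def IsEffectivePair {K L : Type*} [Field K] [LieRing L] [LieAlgebra K L]
    (g₀ : LieSubalgebra K L) : Prop :=
  ∀ I : LieIdeal K L, (I : Submodule K L) ≤ g₀.toSubmodule → I = ⊥

/-!
Bracketing with `L` lowers the Weisfeiler degree by one and raises the lower central degree by one,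
so it maps `W (i + 1) ⊓ L_(j)` into `W i ⊓ L_(j + 1)`. If `W 0 ⊓ L_(n) = g₀ ⊓ L_(n)` vanishes, the
sum of the `W i ⊓ L_(j)` with `i + j = n` is therefore an ideal. It lies in `g₀` and contains
`W n = W n ⊓ L_(0)`, which effectiveness then forces to be zero.
-/

theorem lie_mem_lowerCentralSeries_succ {R L M : Type*} [CommRing R] [LieRing L] [LieAlgebra R L]
    [AddCommGroup M] [Module R M] [LieRingModule L M] {k : ℕ} {m : M}
    (hm : m ∈ LieModule.lowerCentralSeries R L M k) (y : L) :
    ⁅y, m⁆ ∈ LieModule.lowerCentralSeries R L M (k + 1) := by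
  rw [LieModule.lowerCentralSeries_succ]
  exact LieSubmodule.lie_mem_lie (LieSubmodule.mem_top y) hm

section

variable {K L : Type*} [Field K] [LieRing L] [LieAlgebra K L] {g₀ : LieSubalgebra K L}

theorem weisfeiler_le (g₀ : LieSubalgebra K L) (k : ℕ) :
    weisfeiler g₀ k ≤ g₀.toSubmodule := by
  induction k with
  | zero => exact le_rfl
  | succ k ih => exact fun _ hx => ih hx.1

theorem lie_mem_weisfeiler_of_mem_succ {k : ℕ} {x : L} (hx : x ∈ weisfeiler g₀ (k + 1)) (y : L) :
    ⁅y, x⁆ ∈ weisfeiler g₀ k := by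
  rw [← lie_skew]
  exact Submodule.neg_mem _ (hx.2 y)

/-- The sum of the intersections of the `i`-th Weisfeiler term with the `j`-th lower central term
over all `i + j = n`: the candidate for an ideal contained in `g₀`. It is only a `Submodule`, as it
need not be stable under `L` when `g₀` meets the `n`-th lower central term. -/
def weisfeilerCentralSum (g₀ : LieSubalgebra K L) (n : ℕ) : Submodule K L :=
  ⨆ (i : ℕ) (j : ℕ) (_ : i + j = n),
    weisfeiler g₀ i ⊓ (LieModule.lowerCentralSeries K L L j).toSubmodule

theorem mem_weisfeilerCentralSum {i j : ℕ} {x : L} (hW : x ∈ weisfeiler g₀ i)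
    (hC : x ∈ LieModule.lowerCentralSeries K L L j) : x ∈ weisfeilerCentralSum g₀ (i + j) :=
  Submodule.mem_iSup_of_mem i <| Submodule.mem_iSup_of_mem j <|
    Submodule.mem_iSup_of_mem rfl ⟨hW, hC⟩

theorem weisfeiler_le_weisfeilerCentralSum (g₀ : LieSubalgebra K L) (n : ℕ) :
    weisfeiler g₀ n ≤ weisfeilerCentralSum g₀ n := fun x hx =>
  mem_weisfeilerCentralSum (j := 0) hx (LieSubmodule.mem_top x)

theorem weisfeilerCentralSum_le (g₀ : LieSubalgebra K L) (n : ℕ) :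
    weisfeilerCentralSum g₀ n ≤ g₀.toSubmodule :=
  iSup₂_le fun i _ => iSup_le fun _ => inf_le_left.trans (weisfeiler_le g₀ i)

theorem lie_mem_weisfeilerCentralSum {n : ℕ}
    (hdisj : Disjoint g₀.toSubmodule (LieModule.lowerCentralSeries K L L n).toSubmodule)
    {x : L} (hx : x ∈ weisfeilerCentralSum g₀ n) (y : L) :
    ⁅y, x⁆ ∈ weisfeilerCentralSum g₀ n := by
  suffices h : weisfeilerCentralSum g₀ n ≤
      (weisfeilerCentralSum g₀ n).comap (LieAlgebra.ad K L y : L →ₗ[K] L) from h hx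
  refine iSup₂_le fun i j => iSup_le ?_
  rintro rfl z ⟨hW, hC⟩
  change ⁅y, z⁆ ∈ weisfeilerCentralSum g₀ (i + j)
  cases i with
  | zero =>
    rw [Nat.zero_add] at hdisj
    obtain rfl : z = 0 := Submodule.disjoint_def.mp hdisj z hW hC
    rw [lie_zero]
    exact Submodule.zero_mem _
  | succ i =>
    rw [Nat.succ_add_eq_add_succ]
    exact mem_weisfeilerCentralSum (lie_mem_weisfeiler_of_mem_succ hW y)
      (lie_mem_lowerCentralSeries_succ hC y)

theorem IsEffectivePair.weisfeiler_eq_bot_of_disjoint (heff : IsEffectivePair g₀) {n : ℕ}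
    (hdisj : Disjoint g₀.toSubmodule (LieModule.lowerCentralSeries K L L n).toSubmodule) :
    weisfeiler g₀ n = ⊥ := by
  let I : LieIdeal K L :=
    { weisfeilerCentralSum g₀ n with
      lie_mem := fun {y _} hx => lie_mem_weisfeilerCentralSum hdisj hx y }
  have hI : I = ⊥ := heff I (weisfeilerCentralSum_le g₀ n)
  have hsum : weisfeilerCentralSum g₀ n = ⊥ := congrArg LieSubmodule.toSubmodule hI
  exact eq_bot_mono (weisfeiler_le_weisfeilerCentralSum g₀ n) hsum

theorem stabilizer_inter_lowerCentralSeries_ne_bot_general (heff : IsEffectivePair g₀) {n : ℕ}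
    (hn : weisfeiler g₀ n ≠ ⊥) :
    ∃ a : L, a ≠ 0 ∧ a ∈ g₀ ∧ a ∈ LieModule.lowerCentralSeries K L L n := by
  by_contra! hcon
  refine hn (heff.weisfeiler_eq_bot_of_disjoint (Submodule.disjoint_def.mpr fun x hx hC => ?_))
  exact by_contra fun hx0 => hcon x hx0 hx hC

end

/-- If `(𝔤, 𝔤₀)` is effective with `𝔤₀ ≠ 0` and order `r`, then
`𝔤₀ ∩ 𝔤_{(r-1)} ≠ 0` where `𝔤_{(r-1)}` is the `(r-1)`-st term of the lower
central series of `𝔤`. -/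
theorem stabilizer_inter_lowerCentralSeries_ne_bot
    {K : Type*} [Field K] [CharZero K]
    {L : Type*} [LieRing L] [LieAlgebra K L] [Module.Finite K L]
    (g₀ : LieSubalgebra K L) (hg₀ : g₀ ≠ ⊥) (heff : IsEffectivePair g₀)
    (r : ℕ) (hbot : weisfeiler g₀ r = ⊥) (hmin : ∀ s < r, weisfeiler g₀ s ≠ ⊥) :
    ∃ a : L, a ≠ 0 ∧ a ∈ g₀ ∧ a ∈ LieModule.lowerCentralSeries K L L (r - 1) := by
  have hr : r ≠ 0 := by
    rintro rfl
    exact hg₀ (LieSubalgebra.toSubmodule_injective hbot)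
  exact stabilizer_inter_lowerCentralSeries_ne_bot_general heff (hmin _ (Nat.sub_one_lt hr))
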